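/- For the code C_2(n,k,η,t) with mixing coefficients satisfying e_j ∉ {0, 1} for all j = 1,…,2η, every one of the first t·η nodes retains optimal repair access: for each node index m with 1 ≤ m ≤ t·η, there exist d distinct helper node indices h_1,…,h_d ∈ {1,…,n}∖{m}, a choice of exactly t of the t² stored symbols of each helper node, and a reconstruction function φ : F^{d·t} → F^{t²}, such that for every choice of the t message arrays, applying φ to the d·t accessed symbols yields exactly the t² symbols stored in node m. In particular the total repair access is d·t = d·α/(d−k+1) symbols with α = t², matching the minimum repair bandwidth. -/

import Mathlib

/-- The codeword symbol `c_h = (s · G)_h` of the underlying `(n,k)` MDS code. -/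
noncomputable def codewordSym {F : Type*} [Field F] {n k : ℕ}
    (G : Matrix (Fin k) (Fin n) F) (s : Fin k → F) (h : Fin n) : F :=
  ∑ i : Fin k, s i * G i h

/-- The symbol stored in row `ℓ` of node `m` of the transformed code `C₁(n,k,η,t)`:
for `m` among the first `η·t` nodes, with group index `j = ⌊m/t⌋`, in-group index
`i = m mod t` and companion node `⌊m/t⌋·t + ℓ`, the stored symbol is
`c^ℓ_m + c^i_{comp}` if `ℓ < i`, `c^i_m` if `ℓ = i`, and `c^ℓ_m + e_j·c^i_{comp}` if
`ℓ > i`; the remaining nodes `m ≥ η·t` store the plain codeword symbols `c^ℓ_m`.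
(Node and row indices are 0-based.) -/
noncomputable def storedC1 {F : Type*} [Field F] {n k : ℕ} (t η : ℕ) (ht : 0 < t)
    (hηt : η * t ≤ n) (G : Matrix (Fin k) (Fin n) F) (e : Fin η → F)
    (s : Fin t → Fin k → F) (m : Fin n) (ℓ : Fin t) : F :=
  if hm : (m : ℕ) < η * t then
    have hj : (m : ℕ) / t < η := by
      by_contra hcon
      push_neg at hcon
      have h1 : η * t ≤ (m : ℕ) / t * t := Nat.mul_le_mul_right t hcon
      have h2 : (m : ℕ) / t * t ≤ (m : ℕ) := Nat.div_mul_le_self _ _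
      omega
    have hcomp : (m : ℕ) / t * t + (ℓ : ℕ) < n := by
      have h3 : ((m : ℕ) / t + 1) * t ≤ η * t := Nat.mul_le_mul_right t hj
      have h4 : (m : ℕ) / t * t + t = ((m : ℕ) / t + 1) * t := by ring
      have h5 := ℓ.isLt
      omega
    have hi : (m : ℕ) % t < t := Nat.mod_lt _ ht
    let comp : Fin n := ⟨(m : ℕ) / t * t + (ℓ : ℕ), hcomp⟩
    if (ℓ : ℕ) < (m : ℕ) % t then
      codewordSym G (s ℓ) m + codewordSym G (s ⟨(m : ℕ) % t, hi⟩) comp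
    else if (ℓ : ℕ) = (m : ℕ) % t then
      codewordSym G (s ℓ) m
    else
      codewordSym G (s ℓ) m + e ⟨(m : ℕ) / t, hj⟩ * codewordSym G (s ⟨(m : ℕ) % t, hi⟩) comp
  else codewordSym G (s ℓ) m

/-- The symbol in block `ℓ`, position `r`, of node `m` of the code `C₂(n,k,η,t)`
(sub-packetization `t²`), built from `t` independent instances of `C₁(n,k,η,t)` (with
message arrays `S 0, …, S (t-1)` and mixing coefficients `e₁`) by additionally mixing
the second set of `η·t` nodes with the coefficients `e₂ = (e_{η+1},…,e_{2η})`: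
writing `v^ℓ_h` for the content vector of node `h` in instance `ℓ`, node
`η·t + (j−1)·t + i` stores in block `ℓ` the vector `v^ℓ + v^i(comp)` if `ℓ < i`,
`v^i` if `ℓ = i`, and `v^ℓ + e_{η+j}·v^i(comp)` if `ℓ > i`, where
`comp = η·t + (j−1)·t + ℓ`; every other node `h` stores `v^1_h,…,v^t_h`. -/
noncomputable def storedC2 {F : Type*} [Field F] {n k : ℕ} (t η : ℕ) (ht : 0 < t)
    (hηt : η * t ≤ n) (h2ηt : 2 * (η * t) ≤ n) (G : Matrix (Fin k) (Fin n) F)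
    (e₁ e₂ : Fin η → F) (S : Fin t → Fin t → Fin k → F) (m : Fin n) (ℓ r : Fin t) : F :=
  let v : Fin t → Fin n → Fin t → F :=
    fun inst h => storedC1 t η ht hηt G e₁ (S inst) h
  if hm : η * t ≤ (m : ℕ) ∧ (m : ℕ) < 2 * (η * t) then
    have hpos : (m : ℕ) - η * t < η * t := by omega
    have hj : ((m : ℕ) - η * t) / t < η := by
      by_contra hcon
      push_neg at hcon
      have h1 : η * t ≤ ((m : ℕ) - η * t) / t * t := Nat.mul_le_mul_right t hcon
      have h2 : ((m : ℕ) - η * t) / t * t ≤ (m : ℕ) - η * t := Nat.div_mul_le_self _ _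
      omega
    have hcomp : η * t + ((m : ℕ) - η * t) / t * t + (ℓ : ℕ) < n := by
      have h3 : (((m : ℕ) - η * t) / t + 1) * t ≤ η * t := Nat.mul_le_mul_right t hj
      have h4 : ((m : ℕ) - η * t) / t * t + t = (((m : ℕ) - η * t) / t + 1) * t := by ring
      have h5 := ℓ.isLt
      omega
    have hi : ((m : ℕ) - η * t) % t < t := Nat.mod_lt _ ht
    let comp : Fin n := ⟨η * t + ((m : ℕ) - η * t) / t * t + (ℓ : ℕ), hcomp⟩
    if (ℓ : ℕ) < ((m : ℕ) - η * t) % t then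
      v ℓ m r + v ⟨((m : ℕ) - η * t) % t, hi⟩ comp r
    else if (ℓ : ℕ) = ((m : ℕ) - η * t) % t then
      v ℓ m r
    else
      v ℓ m r + e₂ ⟨((m : ℕ) - η * t) / t, hj⟩ * v ⟨((m : ℕ) - η * t) % t, hi⟩ comp r
  else v ℓ m r

/-!
Let the failed node be the `i`-th one of a group of the first set. From every helper, read row `i`
of each of the `t` instances. The helpers are the `t - 1` other nodes of the group and a set `K` of
`k` further nodes whose row `i` is not mixed by the first transformation, chosen so that within each
group of the second set it contains, with a node, all later ones.

On `K` the message vectors `S ℓ i` are decoded for `ℓ` descending. A node of `K` at position `p` of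
its group holds `S ℓ i` mixed with `S p i`: for `p < ℓ` its partner at position `ℓ` also lies in
`K`, and the two mixed symbols are independent because `e ≠ 1`; for `ℓ < p` the vector `S p i` is
already known and is subtracted. Since `k` columns of `G` are invertible, `S ℓ i` is determined.
The other nodes of the failed group then reveal, because `e ≠ 0`, the remaining symbols of the
failed node.
-/

open Finset

section Mixing

/-- The symbol in row `ℓ` of the `i`-th node of a group after the pairwise transformation with
coefficient `e`, where `x` is the original symbol and `y` the symbol in row `i` of the `ℓ`-th node
of the group. -/
def mixSym {R ι : Type*} [Semiring R] [LinearOrder ι] (e : R) (i ℓ : ι) (x y : R) : R :=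
  if ℓ < i then x + y else if ℓ = i then x else x + e * y

variable {R ι : Type*} [LinearOrder ι] {i ℓ : ι}

theorem mixSym_self [Semiring R] (e : R) (i : ι) (x y : R) : mixSym e i i x y = x := by
  simp [mixSym]

theorem mixSym_left_injective [Ring R] (e : R) (i ℓ : ι) (y : R) :
    Function.Injective fun x => mixSym e i ℓ x y := by
  intro x x' h
  dsimp only [mixSym] at h
  split_ifs at h
  · exact add_right_cancel h
  · exact h
  · exact add_right_cancel h

theorem mixSym_right_injective [Ring R] [NoZeroDivisors R] {e : R} (he : e ≠ 0) (hℓ : ℓ ≠ i)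
    (x : R) : Function.Injective (mixSym e i ℓ x) := by
  intro y y' h
  simp only [mixSym, hℓ, if_false] at h
  split_ifs at h
  · exact add_left_cancel h
  · exact mul_left_cancel₀ he (add_left_cancel h)

theorem eq_of_mixSym_eq_of_mixSym_swap_eq [CommRing R] [NoZeroDivisors R] {e : R} (he : e ≠ 1)
    (hℓ : i < ℓ) {x x' y y' : R} (h : mixSym e i ℓ x y = mixSym e i ℓ x' y')
    (hswap : mixSym e ℓ i y x = mixSym e ℓ i y' x') : x = x' := by
  simp only [mixSym, hℓ, hℓ.ne', hℓ.not_gt, if_true, if_false] at h hswap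
  refine mul_left_cancel₀ (sub_ne_zero.2 he.symm) ?_
  linear_combination h - e * hswap

end Mixing

section Nodes

variable {n t η : ℕ}

/-- The `p`-th node of the `j`-th group in the first set of `η * t` nodes. -/
def firstSetNode (hηt : η * t ≤ n) (j : Fin η) (p : Fin t) : Fin n :=
  Fin.castLE hηt (finProdFinEquiv (j, p))

/-- The `p`-th node of the `j`-th group in the second set of `η * t` nodes. -/
def secondSetNode (h2ηt : 2 * (η * t) ≤ n) (j : Fin η) (p : Fin t) : Fin n :=
  Fin.castLE (two_mul (η * t) ▸ h2ηt) (Fin.natAdd (η * t) (finProdFinEquiv (j, p)))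

theorem val_firstSetNode (hηt : η * t ≤ n) (j : Fin η) (p : Fin t) :
    (firstSetNode hηt j p : ℕ) = p + t * j := rfl

theorem val_secondSetNode (h2ηt : 2 * (η * t) ≤ n) (j : Fin η) (p : Fin t) :
    (secondSetNode h2ηt j p : ℕ) = η * t + (p + t * j) := rfl

theorem firstSetNode_lt (hηt : η * t ≤ n) (j : Fin η) (p : Fin t) :
    (firstSetNode hηt j p : ℕ) < η * t :=
  (finProdFinEquiv (j, p)).isLt

theorem secondSetNode_lt (h2ηt : 2 * (η * t) ≤ n) (j : Fin η) (p : Fin t) :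
    (secondSetNode h2ηt j p : ℕ) < 2 * (η * t) :=
  (two_mul (η * t)).symm ▸ Nat.add_lt_add_left (finProdFinEquiv (j, p)).isLt _

theorem firstSetNode_injective (hηt : η * t ≤ n) :
    Function.Injective fun q : Fin η × Fin t => firstSetNode hηt q.1 q.2 :=
  (Fin.castLE_injective hηt).comp finProdFinEquiv.injective

theorem secondSetNode_strictMono (h2ηt : 2 * (η * t) ≤ n) (j : Fin η) :
    StrictMono (secondSetNode h2ηt j) := by
  intro p q hpq
  rw [Fin.lt_def, val_secondSetNode, val_secondSetNode]
  omega

theorem exists_eq_firstSetNode (hηt : η * t ≤ n) {x : Fin n} (hx : (x : ℕ) < η * t) :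
    ∃ j p, x = firstSetNode hηt j p := by
  obtain ⟨⟨j, p⟩, hjp⟩ := finProdFinEquiv.surjective (⟨x, hx⟩ : Fin (η * t))
  exact ⟨j, p, Fin.ext (congrArg Fin.val hjp).symm⟩

theorem exists_eq_secondSetNode (h2ηt : 2 * (η * t) ≤ n) {x : Fin n} (hx : η * t ≤ (x : ℕ))
    (hx' : (x : ℕ) < 2 * (η * t)) : ∃ j p, x = secondSetNode h2ηt j p := by
  obtain ⟨⟨j, p⟩, hjp⟩ :=
    finProdFinEquiv.surjective (⟨x - η * t, by omega⟩ : Fin (η * t))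
  have hval : (p + t * j : ℕ) = x - η * t := congrArg Fin.val hjp
  exact ⟨j, p, Fin.ext (by rw [val_secondSetNode]; omega)⟩

theorem div_firstSetNode (hηt : η * t ≤ n) (j : Fin η) (p : Fin t) :
    (firstSetNode hηt j p : ℕ) / t = j := by
  rw [val_firstSetNode, Nat.add_mul_div_left _ _ p.pos, Nat.div_eq_of_lt p.isLt, zero_add]

theorem mod_firstSetNode (hηt : η * t ≤ n) (j : Fin η) (p : Fin t) :
    (firstSetNode hηt j p : ℕ) % t = p := by
  rw [val_firstSetNode, Nat.add_mul_mod_self_left, Nat.mod_eq_of_lt p.isLt]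

theorem sub_div_secondSetNode (h2ηt : 2 * (η * t) ≤ n) (j : Fin η) (p : Fin t) :
    ((secondSetNode h2ηt j p : ℕ) - η * t) / t = j := by
  rw [val_secondSetNode, Nat.add_sub_cancel_left, Nat.add_mul_div_left _ _ p.pos,
    Nat.div_eq_of_lt p.isLt, zero_add]

theorem sub_mod_secondSetNode (h2ηt : 2 * (η * t) ≤ n) (j : Fin η) (p : Fin t) :
    ((secondSetNode h2ηt j p : ℕ) - η * t) % t = p := by
  rw [val_secondSetNode, Nat.add_sub_cancel_left, Nat.add_mul_mod_self_left,
    Nat.mod_eq_of_lt p.isLt]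

end Nodes

section Storage

variable {F : Type*} [Field F] {n k t η : ℕ} (ht : 0 < t) (hηt : η * t ≤ n)
  (h2ηt : 2 * (η * t) ≤ n) (G : Matrix (Fin k) (Fin n) F)

theorem storedC1_of_le (e : Fin η → F) (s : Fin t → Fin k → F) {x : Fin n}
    (hx : η * t ≤ (x : ℕ)) (ℓ : Fin t) :
    storedC1 t η ht hηt G e s x ℓ = codewordSym G (s ℓ) x :=
  dif_neg hx.not_gt

theorem storedC1_firstSetNode (e : Fin η → F) (s : Fin t → Fin k → F) (j : Fin η) (p ℓ : Fin t) :
    storedC1 t η ht hηt G e s (firstSetNode hηt j p) ℓ =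
      mixSym (e j) p ℓ (codewordSym G (s ℓ) (firstSetNode hηt j p))
        (codewordSym G (s p) (firstSetNode hηt j ℓ)) := by
  have hcomp (h) : (⟨j * t + ℓ, h⟩ : Fin n) = firstSetNode hηt j ℓ :=
    Fin.ext (by rw [val_firstSetNode]; ring)
  rw [storedC1, dif_pos (firstSetNode_lt hηt j p)]
  simp only [div_firstSetNode, mod_firstSetNode, hcomp, Fin.eta, mixSym, Fin.lt_def, Fin.ext_iff]

theorem storedC2_firstSetNode (e₁ e₂ : Fin η → F) (S : Fin t → Fin t → Fin k → F) (j : Fin η)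
    (p ℓ r : Fin t) :
    storedC2 t η ht hηt h2ηt G e₁ e₂ S (firstSetNode hηt j p) ℓ r =
      mixSym (e₁ j) p r (codewordSym G (S ℓ r) (firstSetNode hηt j p))
        (codewordSym G (S ℓ p) (firstSetNode hηt j r)) := by
  rw [storedC2, dif_neg fun h => (firstSetNode_lt hηt j p).not_ge h.1]
  exact storedC1_firstSetNode ht hηt G e₁ (S ℓ) j p r

theorem storedC2_secondSetNode (e₁ e₂ : Fin η → F) (S : Fin t → Fin t → Fin k → F) (j : Fin η)
    (p ℓ r : Fin t) :
    storedC2 t η ht hηt h2ηt G e₁ e₂ S (secondSetNode h2ηt j p) ℓ r =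
      mixSym (e₂ j) p ℓ (codewordSym G (S ℓ r) (secondSetNode h2ηt j p))
        (codewordSym G (S p r) (secondSetNode h2ηt j ℓ)) := by
  have hcomp (h) : (⟨η * t + j * t + ℓ, h⟩ : Fin n) = secondSetNode h2ηt j ℓ :=
    Fin.ext (by rw [val_secondSetNode]; ring)
  have hle (q : Fin t) : η * t ≤ (secondSetNode h2ηt j q : ℕ) := Nat.le_add_right _ _
  rw [storedC2, dif_pos ⟨hle p, secondSetNode_lt h2ηt j p⟩]
  simp only [sub_div_secondSetNode, sub_mod_secondSetNode, hcomp, Fin.eta,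
    storedC1_of_le ht hηt G _ _ (hle _), mixSym, Fin.lt_def, Fin.ext_iff]

theorem storedC2_of_two_mul_le (e₁ e₂ : Fin η → F) (S : Fin t → Fin t → Fin k → F) {x : Fin n}
    (hx : 2 * (η * t) ≤ (x : ℕ)) (ℓ r : Fin t) :
    storedC2 t η ht hηt h2ηt G e₁ e₂ S x ℓ r = codewordSym G (S ℓ r) x := by
  rw [storedC2, dif_neg fun h => hx.not_gt h.2]
  exact storedC1_of_le ht hηt G e₁ (S ℓ) (by omega) r

end Storage

section Helpers

theorem exists_upwardClosed_subset_card_eq {α : Type*} [LinearOrder α] (A : Finset α) {k : ℕ}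
    (hk : k ≤ #A) : ∃ K ⊆ A, #K = k ∧ ∀ x ∈ K, ∀ y ∈ A, x < y → y ∈ K := by
  induction A using Finset.induction_on_min with
  | empty => exact ⟨∅, subset_rfl, (Nat.le_zero.1 hk).symm, by simp⟩
  | insert a A ha ih =>
    rcases le_or_gt k #A with hkA | hkA
    · obtain ⟨K, hKA, hcard, hup⟩ := ih hkA
      refine ⟨K, hKA.trans (subset_insert a A), hcard, fun x hx y hy hxy => ?_⟩
      have hya : y ≠ a := ((ha x (hKA hx)).trans hxy).ne'
      exact hup x hx y (mem_of_mem_insert_of_ne hy hya) hxy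
    · refine ⟨insert a A, subset_rfl, ?_, fun _ _ _ hy _ => hy⟩
      exact le_antisymm ((card_insert_le a A).trans hkA) hk

variable {n t η : ℕ}

/-- The nodes of the first set in which row `i` is mixed with another row, that is, the nodes whose
position in their group is not `i`. -/
def rowMixedNodes (hηt : η * t ≤ n) (i : Fin t) : Finset (Fin n) :=
  (univ ×ˢ {i}ᶜ).image fun q : Fin η × Fin t => firstSetNode hηt q.1 q.2

/-- The nodes of the `j`-th group of the first set other than its `i`-th node. -/
def groupMates (hηt : η * t ≤ n) (j : Fin η) (i : Fin t) : Finset (Fin n) :=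
  ({i}ᶜ : Finset (Fin t)).image (firstSetNode hηt j)

theorem firstSetNode_mem_rowMixedNodes {hηt : η * t ≤ n} {j : Fin η} {p i : Fin t} :
    firstSetNode hηt j p ∈ rowMixedNodes hηt i ↔ p ≠ i := by
  rw [rowMixedNodes, (firstSetNode_injective hηt).mem_finset_image (a := (j, p))]
  simp

theorem card_rowMixedNodes (hηt : η * t ≤ n) (i : Fin t) :
    #(rowMixedNodes hηt i) = η * (t - 1) := by
  rw [rowMixedNodes, card_image_of_injective _ (firstSetNode_injective hηt), card_product]
  simp [card_compl]

theorem secondSetNode_notMem_rowMixedNodes (hηt : η * t ≤ n) (h2ηt : 2 * (η * t) ≤ n) (j : Fin η)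
    (p i : Fin t) : secondSetNode h2ηt j p ∉ rowMixedNodes hηt i := by
  simp only [rowMixedNodes, mem_image, not_exists, not_and]
  intro q _ hq
  have := firstSetNode_lt hηt q.1 q.2
  rw [hq, val_secondSetNode] at this
  omega

theorem card_groupMates (hηt : η * t ≤ n) (j : Fin η) (i : Fin t) :
    #(groupMates hηt j i) = t - 1 := by
  have hinj : Function.Injective (firstSetNode hηt j) :=
    (firstSetNode_injective hηt).comp (Prod.mk_right_injective j)
  rw [groupMates, card_image_of_injective _ hinj]
  simp [card_compl]

theorem groupMates_subset_rowMixedNodes (hηt : η * t ≤ n) (j : Fin η) (i : Fin t) :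
    groupMates hηt j i ⊆ rowMixedNodes hηt i := by
  intro x hx
  obtain ⟨p, hp, rfl⟩ := mem_image.1 hx
  exact firstSetNode_mem_rowMixedNodes.2 (by simpa using hp)

theorem exists_decodingSet {k : ℕ} (hηt : η * t ≤ n) (h2ηt : 2 * (η * t) ≤ n)
    (hη : η * (t - 1) + k < n) (j₀ : Fin η) (i : Fin t) :
    ∃ K : Finset (Fin n), #K = k ∧ firstSetNode hηt j₀ i ∉ K ∧ Disjoint K (rowMixedNodes hηt i) ∧
      ∀ j p q, p < q → secondSetNode h2ηt j p ∈ K → secondSetNode h2ηt j q ∈ K := by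
  set A : Finset (Fin n) := (insert (firstSetNode hηt j₀ i) (rowMixedNodes hηt i))ᶜ with hA
  have hcard : k ≤ #A := by
    have hle := card_insert_le (firstSetNode hηt j₀ i) (rowMixedNodes hηt i)
    rw [card_rowMixedNodes] at hle
    rw [hA, card_compl, Fintype.card_fin]
    omega
  have hsecond (j : Fin η) (q : Fin t) : secondSetNode h2ηt j q ∈ A := by
    rw [hA, mem_compl, mem_insert, not_or]
    refine ⟨fun h => ?_, secondSetNode_notMem_rowMixedNodes hηt h2ηt j q i⟩
    have := firstSetNode_lt hηt j₀ i
    rw [← h, val_secondSetNode] at this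
    omega
  obtain ⟨K, hKA, hKcard, hup⟩ := exists_upwardClosed_subset_card_eq A hcard
  have hdisj : Disjoint K (insert (firstSetNode hηt j₀ i) (rowMixedNodes hηt i)) :=
    subset_compl_iff_disjoint_right.1 hKA
  rw [disjoint_insert_right] at hdisj
  exact ⟨K, hKcard, hdisj.1, hdisj.2, fun j p q hpq hp =>
    hup _ hp _ (hsecond j q) (secondSetNode_strictMono h2ηt j hpq)⟩

end Helpers

section Repair

variable {F : Type*} [Field F] {n k : ℕ} {G : Matrix (Fin k) (Fin n) F}

/-- `G` generates an MDS code: any `k` columns of `G` form an invertible matrix. -/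
def IsMDSGenerator (G : Matrix (Fin k) (Fin n) F) : Prop :=
  ∀ cols : Fin k → Fin n, Function.Injective cols →
    IsUnit (Matrix.of fun i j : Fin k => G i (cols j)).det

theorem IsMDSGenerator.eq_of_codewordSym_eq (hG : IsMDSGenerator G) {K : Finset (Fin n)}
    (hK : #K = k) {s s' : Fin k → F} (h : ∀ x ∈ K, codewordSym G s x = codewordSym G s' x) :
    s = s' := by
  have hunit := hG (K.orderEmbOfFin hK) (K.orderEmbOfFin hK).injective
  apply Matrix.vecMul_injective_of_isUnit ((Matrix.isUnit_iff_isUnit_det _).2 hunit)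
  ext j
  exact h _ (K.orderEmbOfFin_mem hK j)

variable {t η : ℕ} {ht : 0 < t} {hηt : η * t ≤ n} {h2ηt : 2 * (η * t) ≤ n} {e₁ e₂ : Fin η → F}
  {S S' : Fin t → Fin t → Fin k → F} {K : Finset (Fin n)} {i : Fin t}

theorem codewordSym_eq_of_storedC2_row_eq (he₂ : ∀ j, e₂ j ≠ 1)
    (hrow : Disjoint K (rowMixedNodes hηt i))
    (hup : ∀ j p q, p < q → secondSetNode h2ηt j p ∈ K → secondSetNode h2ηt j q ∈ K)
    (hK : ∀ x ∈ K, ∀ ℓ, storedC2 t η ht hηt h2ηt G e₁ e₂ S x ℓ i =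
      storedC2 t η ht hηt h2ηt G e₁ e₂ S' x ℓ i)
    {ℓ : Fin t} (hknown : ∀ p > ℓ, S p i = S' p i) {x : Fin n} (hx : x ∈ K) :
    codewordSym G (S ℓ i) x = codewordSym G (S' ℓ i) x := by
  have hxℓ := hK x hx ℓ
  rcases lt_or_ge (x : ℕ) (η * t) with hfirst | hfirst
  · obtain ⟨j, p, rfl⟩ := exists_eq_firstSetNode hηt hfirst
    obtain rfl : p = i :=
      not_ne_iff.1 (firstSetNode_mem_rowMixedNodes.not.1 (disjoint_left.1 hrow hx))
    simpa only [storedC2_firstSetNode, mixSym_self] using hxℓ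
  rcases lt_or_ge (x : ℕ) (2 * (η * t)) with hsecond | hsecond
  · obtain ⟨j, p, rfl⟩ := exists_eq_secondSetNode h2ηt hfirst hsecond
    rw [storedC2_secondSetNode, storedC2_secondSetNode] at hxℓ
    rcases lt_trichotomy p ℓ with hpℓ | rfl | hℓp
    · have hpartner := hK _ (hup j p ℓ hpℓ hx) p
      rw [storedC2_secondSetNode, storedC2_secondSetNode] at hpartner
      exact eq_of_mixSym_eq_of_mixSym_swap_eq (he₂ j) hpℓ hxℓ hpartner
    · simpa only [mixSym_self] using hxℓ
    · rw [hknown p hℓp] at hxℓ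
      exact mixSym_left_injective _ _ _ _ hxℓ
  · simpa only [storedC2_of_two_mul_le ht hηt h2ηt G _ _ _ hsecond] using hxℓ

theorem IsMDSGenerator.row_eq_of_storedC2_row_eq (hG : IsMDSGenerator G) (he₂ : ∀ j, e₂ j ≠ 1)
    (hcard : #K = k) (hrow : Disjoint K (rowMixedNodes hηt i))
    (hup : ∀ j p q, p < q → secondSetNode h2ηt j p ∈ K → secondSetNode h2ηt j q ∈ K)
    (hK : ∀ x ∈ K, ∀ ℓ, storedC2 t η ht hηt h2ηt G e₁ e₂ S x ℓ i =
      storedC2 t η ht hηt h2ηt G e₁ e₂ S' x ℓ i) (ℓ : Fin t) :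
    S ℓ i = S' ℓ i := by
  induction ℓ using WellFoundedGT.induction with
  | ind ℓ hknown =>
    exact hG.eq_of_codewordSym_eq hcard fun x hx =>
      codewordSym_eq_of_storedC2_row_eq he₂ hrow hup hK hknown hx

theorem storedC2_firstSetNode_eq_of_groupMates (he₁ : ∀ j, e₁ j ≠ 0)
    (hrow : ∀ ℓ, S ℓ i = S' ℓ i) {j : Fin η}
    (hmates : ∀ x ∈ groupMates hηt j i, ∀ ℓ, storedC2 t η ht hηt h2ηt G e₁ e₂ S x ℓ i =
      storedC2 t η ht hηt h2ηt G e₁ e₂ S' x ℓ i) (ℓ r : Fin t) :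
    storedC2 t η ht hηt h2ηt G e₁ e₂ S (firstSetNode hηt j i) ℓ r =
      storedC2 t η ht hηt h2ηt G e₁ e₂ S' (firstSetNode hηt j i) ℓ r := by
  rw [storedC2_firstSetNode, storedC2_firstSetNode, hrow]
  congr 1
  rcases eq_or_ne r i with rfl | hr
  · rw [hrow]
  · have hmate := hmates _ (mem_image_of_mem (firstSetNode hηt j) (by simpa using hr)) ℓ
    rw [storedC2_firstSetNode, storedC2_firstSetNode, hrow] at hmate
    exact mixSym_right_injective (he₁ j) hr.symm _ hmate

theorem IsMDSGenerator.exists_helpers (hG : IsMDSGenerator G) (ht : 0 < t) (hηt : η * t ≤ n)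
    (h2ηt : 2 * (η * t) ≤ n) (hη : η * (t - 1) + k < n) (he₁ : ∀ j, e₁ j ≠ 0)
    (he₂ : ∀ j, e₂ j ≠ 1) (j : Fin η) (i : Fin t) :
    ∃ H : Finset (Fin n), #H = k + (t - 1) ∧ firstSetNode hηt j i ∉ H ∧
      ∀ S S' : Fin t → Fin t → Fin k → F,
        (∀ x ∈ H, ∀ ℓ, storedC2 t η ht hηt h2ηt G e₁ e₂ S x ℓ i =
          storedC2 t η ht hηt h2ηt G e₁ e₂ S' x ℓ i) →
        ∀ ℓ r, storedC2 t η ht hηt h2ηt G e₁ e₂ S (firstSetNode hηt j i) ℓ r =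
          storedC2 t η ht hηt h2ηt G e₁ e₂ S' (firstSetNode hηt j i) ℓ r := by
  obtain ⟨K, hKcard, hKfailed, hKrow, hKup⟩ := exists_decodingSet hηt h2ηt hη j i
  have hmates := groupMates_subset_rowMixedNodes hηt j i
  refine ⟨K ∪ groupMates hηt j i, ?_, ?_, fun S S' hH => ?_⟩
  · rw [card_union_of_disjoint (hKrow.mono_right hmates), hKcard, card_groupMates]
  · rw [mem_union, not_or]
    exact ⟨hKfailed, fun h => firstSetNode_mem_rowMixedNodes.1 (hmates h) rfl⟩
  · have hrow := hG.row_eq_of_storedC2_row_eq he₂ hKcard hKrow hKup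
      fun x hx => hH x (mem_union_left _ hx)
    exact storedC2_firstSetNode_eq_of_groupMates he₁ hrow
      fun x hx => hH x (mem_union_right _ hx)

end Repair

theorem stmt_11_general {F : Type*} [Field F] {n k d t η : ℕ} (hdt : d + 1 = k + t)
    (hη : η * (t - 1) + k < n) (ht : 0 < t) (hηt : η * t ≤ n) (h2ηt : 2 * (η * t) ≤ n)
    {G : Matrix (Fin k) (Fin n) F} (hG : IsMDSGenerator G) {e₁ e₂ : Fin η → F}
    (he₁ : ∀ j, e₁ j ≠ 0) (he₂ : ∀ j, e₂ j ≠ 1) {m : Fin n} (hm : (m : ℕ) < η * t) :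
    ∃ h : Fin d → Fin n, Function.Injective h ∧ (∀ a, h a ≠ m) ∧
      ∃ sel : Fin d → Fin t → Fin t × Fin t, (∀ a, Function.Injective (sel a)) ∧
        ∃ φ : (Fin d → Fin t → F) → Fin t → Fin t → F,
          ∀ S : Fin t → Fin t → Fin k → F,
            φ (fun a r => storedC2 t η ht hηt h2ηt G e₁ e₂ S (h a) (sel a r).1 (sel a r).2) =
              fun ℓ r => storedC2 t η ht hηt h2ηt G e₁ e₂ S m ℓ r := by
  obtain ⟨j, i, rfl⟩ := exists_eq_firstSetNode hηt hm
  obtain ⟨H, hHcard, hfailed, hrepair⟩ := hG.exists_helpers ht hηt h2ηt hη he₁ he₂ j i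
  have hHd : #H = d := by omega
  refine ⟨H.orderEmbOfFin hHd, (H.orderEmbOfFin hHd).injective,
    fun a ha => hfailed (ha ▸ H.orderEmbOfFin_mem hHd a),
    fun _ ℓ => (ℓ, i), fun _ => Prod.mk_left_injective i, ?_⟩
  have hfactors : Function.FactorsThrough
      (fun S ℓ r => storedC2 t η ht hηt h2ηt G e₁ e₂ S (firstSetNode hηt j i) ℓ r)
      (fun S a ℓ => storedC2 t η ht hηt h2ηt G e₁ e₂ S (H.orderEmbOfFin hHd a) ℓ i) := by
    intro S S' haccessed
    refine funext₂ (hrepair S S' fun x hx ℓ => ?_)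
    obtain ⟨a, rfl⟩ : x ∈ Set.range (H.orderEmbOfFin hHd) := by
      rwa [range_orderEmbOfFin]
    exact congrFun₂ haccessed a ℓ
  obtain ⟨φ, hφ⟩ := (Function.factorsThrough_iff _).1 hfactors
  exact ⟨φ, fun S => (congrFun hφ S).symm⟩

/-- Theorem 5 of the paper: in the code `C₂(n,k,η,t)` (all mixing coefficients outside
`{0,1}`), each of the first `t·η` nodes retains optimal repair access: there are `d`
distinct helper nodes (none equal to the failed node), a choice of exactly `t` of the
`t²` stored symbols of each helper node, and a reconstruction function recovering, for
every message, the `t²` symbols of the failed node from the `d·t` accessed symbols.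
The total repair access `d·t = d·α/(d−k+1)` with `α = t²` matches the minimum repair
bandwidth. -/
theorem stmt_11 {F : Type*} [Field F] (n k d : ℕ) (hk : 1 ≤ k) (hd1 : k + 1 ≤ d)
    (hd2 : d + 1 ≤ n) (t η : ℕ) (htdef : t = d - k + 1)
    (hηdef : η = (n - k - 1) / (d - k)) (ht : 0 < t) (hηt : η * t ≤ n)
    (h2ηt : 2 * (η * t) ≤ n)
    (G : Matrix (Fin k) (Fin n) F)
    (hMDS : ∀ cols : Fin k → Fin n, Function.Injective cols →
      IsUnit (Matrix.of fun i j : Fin k => G i (cols j)).det)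
    (e₁ e₂ : Fin η → F) (he₁ : ∀ j, e₁ j ≠ 0 ∧ e₁ j ≠ 1) (he₂ : ∀ j, e₂ j ≠ 0 ∧ e₂ j ≠ 1)
    (m : Fin n) (hm : (m : ℕ) < t * η) :
    ∃ h : Fin d → Fin n, Function.Injective h ∧ (∀ a, h a ≠ m) ∧
      ∃ sel : Fin d → Fin t → Fin t × Fin t, (∀ a, Function.Injective (sel a)) ∧
        ∃ φ : (Fin d → Fin t → F) → Fin t → Fin t → F,
          ∀ S : Fin t → Fin t → Fin k → F,
            φ (fun a r => storedC2 t η ht hηt h2ηt G e₁ e₂ S (h a)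
                (sel a r).1 (sel a r).2) =
              fun ℓ r => storedC2 t η ht hηt h2ηt G e₁ e₂ S m ℓ r := by
  have hηk : η * (d - k) ≤ n - k - 1 := hηdef ▸ Nat.div_mul_le_self _ _
  exact stmt_11_general (by omega) (by rw [htdef, Nat.add_sub_cancel]; omega) ht hηt h2ηt hMDS
    (fun j => (he₁ j).1) (fun j => (he₂ j).2) (mul_comm t η ▸ hm)
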